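/- Let A be a normed ring and let a, s, p ∈ A satisfy (a·s − s·a)·p = 0 and p·(a·s − s·a) = 0. Then a·s² − s²·a = (a·s − s·a)·(s − p) + (s − p)·(a·s − s·a), and consequently ‖a·s² − s²·a‖ ≤ 2·‖a·s − s·a‖·‖s − p‖. -/

import Mathlib

section NonUnitalRing

variable {R : Type*} [NonUnitalRing R]

theorem lie_mul (a b c : R) : ⁅a, b * c⁆ = ⁅a, b⁆ * c + b * ⁅a, c⁆ := by
  simp only [Ring.lie_def, sub_mul, mul_sub, mul_assoc]
  abel

theorem lie_mul_of_mul_eq_zero {a b c p q : R}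
    (hq : ⁅a, b⁆ * q = 0) (hp : p * ⁅a, c⁆ = 0) :
    ⁅a, b * c⁆ = ⁅a, b⁆ * (c - q) + (b - p) * ⁅a, c⁆ := by
  rw [mul_sub, hq, sub_zero, sub_mul, hp, sub_zero, lie_mul]

end NonUnitalRing

section NonUnitalSeminormedRing

variable {A : Type*} [NonUnitalSeminormedRing A]

theorem norm_lie_mul_le_of_mul_eq_zero {a b c p q : A}
    (hq : ⁅a, b⁆ * q = 0) (hp : p * ⁅a, c⁆ = 0) :
    ‖⁅a, b * c⁆‖ ≤ ‖⁅a, b⁆‖ * ‖c - q‖ + ‖b - p‖ * ‖⁅a, c⁆‖ := by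
  rw [lie_mul_of_mul_eq_zero hq hp]
  exact norm_add_le_of_le (norm_mul_le _ _) (norm_mul_le _ _)

theorem commutator_square_splitting_general (a s p : A)
    (hp_right : ⁅a, s⁆ * p = 0) (hp_left : p * ⁅a, s⁆ = 0) :
    ⁅a, s * s⁆ = ⁅a, s⁆ * (s - p) + (s - p) * ⁅a, s⁆ ∧
      ‖⁅a, s * s⁆‖ ≤ 2 * ‖⁅a, s⁆‖ * ‖s - p‖ := by
  refine ⟨lie_mul_of_mul_eq_zero hp_right hp_left, ?_⟩
  calc
    ‖⁅a, s * s⁆‖ ≤ ‖⁅a, s⁆‖ * ‖s - p‖ + ‖s - p‖ * ‖⁅a, s⁆‖ :=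
      norm_lie_mul_le_of_mul_eq_zero hp_right hp_left
    _ = 2 * ‖⁅a, s⁆‖ * ‖s - p‖ := by ring

end NonUnitalSeminormedRing

/-- The algebraic splitting at the heart of Lemma "Trick1" of the paper: in a normed ring,
if `(a·s − s·a)·p = 0` and `p·(a·s − s·a) = 0`, then
`a·s² − s²·a = (a·s − s·a)·(s − p) + (s − p)·(a·s − s·a)`, and consequently
`‖a·s² − s²·a‖ ≤ 2·‖a·s − s·a‖·‖s − p‖`. -/
theorem commutator_square_splitting {A : Type*} [NormedRing A] (a s p : A)
    (h₁ : (a * s - s * a) * p = 0) (h₂ : p * (a * s - s * a) = 0) :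
    a * s ^ 2 - s ^ 2 * a =
      (a * s - s * a) * (s - p) + (s - p) * (a * s - s * a) ∧
    ‖a * s ^ 2 - s ^ 2 * a‖ ≤ 2 * ‖a * s - s * a‖ * ‖s - p‖ := by
  simpa only [sq, Ring.lie_def] using commutator_square_splitting_general a s p h₁ h₂
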